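/- Let G be a simple 3-uniform hypergraph on n vertices with 3 dividing n. Then the number of 1-factors of G satisfies φ(G) ≤ ((3/2^{3/2})^n · per M(G))^{1/3}. -/

import Mathlib

open scoped Classical in
/-- The permanent of a `d`-dimensional matrix of order `n`. -/
noncomputable def mper {n d : ℕ} (A : (Fin d → Fin n) → ℕ) : ℕ :=
  ∑ σ ∈ Finset.univ.filter (fun σ : Fin d → Equiv.Perm (Fin n) =>
      ∀ h : 0 < d, σ ⟨0, h⟩ = Equiv.refl (Fin n)),
    ∏ i : Fin n, A (fun k => σ k i)

/-- `P` is a 1-factor of the hypergraph with hyperedge set `W`. -/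
def IsOneFactor {n : ℕ} (W : Finset (Finset (Fin n))) (P : Finset (Finset (Fin n))) : Prop :=
  P ⊆ W ∧ ∀ v : Fin n, ∃! e, e ∈ P ∧ v ∈ e

/-- The number of 1-factors of the hypergraph with hyperedge set `W`. -/
noncomputable def numOneFactors {n : ℕ} (W : Finset (Finset (Fin n))) : ℕ :=
  {P : Finset (Finset (Fin n)) | IsOneFactor W P}.ncard

open scoped Classical in
/-- The `d`-dimensional adjacency matrix of the `d`-uniform hypergraph with
hyperedge set `W` on `n` vertices. -/
noncomputable def adjMatrix (n d : ℕ) (W : Finset (Finset (Fin n))) :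
    (Fin d → Fin n) → ℕ :=
  fun α => if Function.Injective α ∧ Finset.image α Finset.univ ∈ W then 1 else 0

/-!
A triple of 1-factors of `W` is a 3-regular family of hyperedges together with a proper
3-colouring of its intersection graph; it has `n` members, which can be enumerated in `n!` ways.
For a fixed 3-uniform family with `n` members, the admissible colourings are compared with the
proper 3-edge-colourings of the incidence graph of the family. The latter are the triples of
permutations contributing to `n! * per M(W)`.

Both counts are related to transversals, one connected component of `m` members at a time. Every
edge of the intersection graph lies in a triangle, so exploring the component from one member
leaves at most `3 * √2 ^ (m - 1)` colourings. By Voorhoeve's bound for permanents there are at least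
`3 * (4 / 3) ^ (m - 1)` transversals, and by Hall's theorem each is a colour class of a proper
edge colouring. The quotient of the two is at most `(3 / (2 * √2)) ^ m`.
-/

open Finset

section Permanent

variable {m R : Type*} [Fintype m] [DecidableEq m] [CommSemiring R]

theorem permanent_updateCol_eq_sum (A : Matrix m m R) (j : m) (u : m → R) :
    (A.updateCol j u).permanent =
      ∑ i, u i * (A.updateCol j (Pi.single i 1)).permanent := by
  have prod_updateCol (v : m → R) (σ : Equiv.Perm m) :
      ∏ k, A.updateCol j v (σ k) k = v (σ j) * ∏ k ∈ univ.erase j, A (σ k) k := by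
    rw [← mul_prod_erase _ _ (mem_univ j), Matrix.updateCol_self]
    congr 1
    exact prod_congr rfl fun k hk => Matrix.updateCol_ne (ne_of_mem_erase hk)
  simp only [Matrix.permanent, prod_updateCol, mul_sum]
  rw [sum_comm]
  simp [Pi.single_apply]

theorem permanent_updateRow_eq_sum (A : Matrix m m R) (i : m) (u : m → R) :
    (A.updateRow i u).permanent =
      ∑ j, u j * (A.updateRow i (Pi.single j 1)).permanent := by
  have transposed (v : m → R) :
      (A.updateRow i v).permanent = (A.transpose.updateCol i v).permanent := by
    rw [Matrix.updateCol_transpose, Matrix.permanent_transpose]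
  simp only [transposed, permanent_updateCol_eq_sum _ _ u]

theorem permanent_updateCol_add (A : Matrix m m R) (j : m) (u v : m → R) :
    (A.updateCol j (u + v)).permanent =
      (A.updateCol j u).permanent + (A.updateCol j v).permanent := by
  simp only [permanent_updateCol_eq_sum A j (u + v), permanent_updateCol_eq_sum A j u,
    permanent_updateCol_eq_sum A j v, Pi.add_apply, add_mul, sum_add_distrib]

theorem permanent_updateRow_add (A : Matrix m m R) (i : m) (u v : m → R) :
    (A.updateRow i (u + v)).permanent =
      (A.updateRow i u).permanent + (A.updateRow i v).permanent := by
  simp only [permanent_updateRow_eq_sum A i (u + v), permanent_updateRow_eq_sum A i u,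
    permanent_updateRow_eq_sum A i v, Pi.add_apply, add_mul, sum_add_distrib]

theorem permanent_add_single (A : Matrix m m R) (i j : m) :
    (A + Matrix.single i j 1).permanent =
      A.permanent + (A.updateRow i (Pi.single j 1)).permanent := by
  have add_single : A + Matrix.single i j 1 = A.updateRow i (A i + Pi.single j 1) := by
    ext r s
    rcases eq_or_ne r i with rfl | hr
    · simp [Matrix.single_apply, Pi.single_apply, eq_comm]
    · simp [hr, hr.symm]
  rw [add_single, permanent_updateRow_add, Matrix.updateRow_eq_self]

theorem permanent_submatrix_equiv_self {m' : Type*} [Fintype m'] [DecidableEq m'] (σ : m' ≃ m)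
    (A : Matrix m m R) : (A.submatrix σ σ).permanent = A.permanent := by
  refine Fintype.sum_equiv σ.permCongr _ _ fun τ => Fintype.prod_equiv σ _ _ fun i => ?_
  simp

theorem permanent_submatrix_congr_range {m' : Type*}
    (A : Matrix m' m' R) {f f' : m → m'} (g : m → m') (hf : f.Injective) (hf' : f'.Injective)
    (hrange : Set.range f = Set.range f') :
    (A.submatrix f g).permanent = (A.submatrix f' g).permanent := by
  let σ : Equiv.Perm m := (Equiv.ofInjective f hf).trans
    ((Equiv.setCongr hrange).trans (Equiv.ofInjective f' hf').symm)
  have hσ : f' ∘ σ = f := by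
    ext i
    simp [σ, Equiv.apply_ofInjective_symm]
  rw [← Matrix.permanent_permute_cols σ (A.submatrix f' g), Matrix.submatrix_submatrix, hσ]
  rfl

theorem exists_perm_of_apply_eq {n : ℕ} {i j : Fin (n + 1)} {σ : Equiv.Perm (Fin (n + 1))}
    (hσ : σ j = i) :
    ∃ τ : Equiv.Perm (Fin n), ∀ k, σ (j.succAbove k) = i.succAbove (τ k) := by
  have avoids (k : Fin n) : ∃ l, σ (j.succAbove k) = i.succAbove l :=
    (Fin.eq_self_or_eq_succAbove i _).resolve_left fun h =>
      Fin.succAbove_ne j k (σ.injective (h.trans hσ.symm))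
  choose τ hτ using avoids
  have τ_injective : τ.Injective := fun k l hkl =>
    Fin.succAbove_right_injective (σ.injective (by rw [hτ, hτ, hkl]))
  exact ⟨Equiv.ofBijective τ (Finite.injective_iff_bijective.1 τ_injective), hτ⟩

theorem permanent_updateCol_single {n : ℕ} (A : Matrix (Fin (n + 1)) (Fin (n + 1)) R)
    (i j : Fin (n + 1)) :
    (A.updateCol j (Pi.single i 1)).permanent =
      (A.submatrix i.succAbove j.succAbove).permanent := by
  let extend (τ : Equiv.Perm (Fin n)) : Equiv.Perm (Fin (n + 1)) :=
    (finSuccEquiv' j).trans (τ.optionCongr.trans (finSuccEquiv' i).symm)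
  have extend_self (τ) : extend τ j = i := by simp [extend]
  have extend_succAbove (τ k) : extend τ (j.succAbove k) = i.succAbove (τ k) := by simp [extend]
  refine (sum_of_injOn extend ?_ (by simp) ?_ ?_).symm
  · intro τ _ τ' _ h
    ext k : 1
    apply Fin.succAbove_right_injective (p := i)
    rw [← extend_succAbove, ← extend_succAbove, h]
  · intro σ _ hσ
    rw [Fin.prod_univ_succAbove _ j, Matrix.updateCol_self, Pi.single_eq_of_ne, zero_mul]
    intro hji
    obtain ⟨τ, hτ⟩ := exists_perm_of_apply_eq hji
    refine hσ ⟨τ, mem_coe.2 (mem_univ τ), ?_⟩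
    ext k : 1
    rcases Fin.eq_self_or_eq_succAbove j k with rfl | ⟨k, rfl⟩
    · rw [extend_self, hji]
    · rw [extend_succAbove, hτ]
  · intro τ _
    rw [Fin.prod_univ_succAbove _ j, Matrix.updateCol_self, extend_self, Pi.single_eq_same,
      one_mul]
    simp [extend_succAbove, Matrix.updateCol_ne]

theorem permanent_of_col_eq_single_add_single {n : ℕ}
    (A : Matrix (Fin (n + 1)) (Fin (n + 1)) R) {a b j : Fin (n + 1)}
    (hcol : (fun i => A i j) = Pi.single a 1 + Pi.single b 1) :
    A.permanent = (A.submatrix a.succAbove j.succAbove).permanent +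
      (A.submatrix b.succAbove j.succAbove).permanent := by
  rw [← permanent_updateCol_single, ← permanent_updateCol_single, ← permanent_updateCol_add,
    ← hcol]
  exact congrArg Matrix.permanent (A.updateCol_eq_self j).symm

/-- The matrix obtained from `A` by deleting column `j` and replacing the two rows `a` and
`a.succAbove k` by their sum, which becomes row `k`. -/
def mergeRows {n : ℕ} (A : Matrix (Fin (n + 2)) (Fin (n + 2)) R) (a : Fin (n + 2))
    (k : Fin (n + 1)) (j : Fin (n + 2)) : Matrix (Fin (n + 1)) (Fin (n + 1)) R :=
  (A.submatrix a.succAbove j.succAbove).updateRow k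
    fun l => A a (j.succAbove l) + A (a.succAbove k) (j.succAbove l)

variable {n : ℕ} (A : Matrix (Fin (n + 2)) (Fin (n + 2)) R) (a : Fin (n + 2)) (k : Fin (n + 1))
  (j : Fin (n + 2))

theorem mergeRows_self (l : Fin (n + 1)) :
    mergeRows A a k j k l = A a (j.succAbove l) + A (a.succAbove k) (j.succAbove l) := by
  simp [mergeRows]

theorem mergeRows_of_ne {i : Fin (n + 1)} (hi : i ≠ k) (l : Fin (n + 1)) :
    mergeRows A a k j i l = A (a.succAbove i) (j.succAbove l) := by
  simp [mergeRows, hi]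

theorem sum_col_mergeRows (l : Fin (n + 1)) :
    ∑ i, mergeRows A a k j i l = ∑ i, A i (j.succAbove l) := by
  rw [Fin.sum_univ_succAbove _ k, mergeRows_self,
    sum_congr rfl fun i _ => mergeRows_of_ne A a k j (Fin.succAbove_ne k i) l,
    Fin.sum_univ_succAbove _ a, Fin.sum_univ_succAbove _ k, add_assoc]

variable {A a k j}

theorem permanent_eq_permanent_mergeRows
    (hcol : (fun i => A i j) = Pi.single a 1 + Pi.single (a.succAbove k) 1) :
    A.permanent = (mergeRows A a k j).permanent := by
  set M := A.submatrix a.succAbove j.succAbove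
  let f (i : Fin (n + 1)) : Fin (n + 2) := Equiv.swap a (a.succAbove k) (a.succAbove i)
  have hf : f.Injective := (Equiv.injective _).comp Fin.succAbove_right_injective
  have range_f : Set.range f = Set.range (a.succAbove k).succAbove := by
    rw [Fin.range_succAbove, show f = Equiv.swap a (a.succAbove k) ∘ a.succAbove from rfl,
      Set.range_comp, Fin.range_succAbove, Set.image_compl_eq (Equiv.bijective _),
      Set.image_singleton, Equiv.swap_apply_left]
  have submatrix_f : A.submatrix f j.succAbove = M.updateRow k fun l => A a (j.succAbove l) := by
    ext i l
    rcases eq_or_ne i k with rfl | hi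
    · simp [f]
    · simp [f, M, hi, Equiv.swap_apply_of_ne_of_ne]
  calc A.permanent
      = M.permanent + (A.submatrix (a.succAbove k).succAbove j.succAbove).permanent :=
        permanent_of_col_eq_single_add_single A hcol
    _ = (M.updateRow k (M k)).permanent +
          (M.updateRow k fun l => A a (j.succAbove l)).permanent := by
        rw [Matrix.updateRow_eq_self, ← submatrix_f,
          permanent_submatrix_congr_range A _ hf Fin.succAbove_right_injective range_f]
    _ = (mergeRows A a k j).permanent := by rw [add_comm, ← permanent_updateRow_add]; rfl

end Permanent

section Voorhoeve

/-- A square matrix of natural numbers is *cubic* if all its row and column sums are `3`: it is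
the biadjacency matrix of a 3-regular bipartite multigraph. -/
def IsCubic {m : Type*} [Fintype m] (A : Matrix m m ℕ) : Prop :=
  (∀ i, ∑ j, A i j = 3) ∧ ∀ j, ∑ i, A i j = 3

theorem exists_eq_single_add_of_sum_eq_succ {m : Type*} [Fintype m] [DecidableEq m] {f : m → ℕ}
    {s : ℕ} (hf : ∑ i, f i = s + 1) :
    ∃ (a : m) (g : m → ℕ), f = Pi.single a 1 + g ∧ ∑ i, g i = s := by
  obtain ⟨a, -, ha⟩ := exists_ne_zero_of_sum_ne_zero (by omega : ∑ i, f i ≠ 0)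
  have split : f = Pi.single a 1 + fun i => f i - Pi.single (M := fun _ => ℕ) a 1 i := by
    ext i
    rcases eq_or_ne i a with rfl | hi
    · simp
      omega
    · simp [hi]
  refine ⟨a, _, split, ?_⟩
  rw [split] at hf
  simp only [Pi.add_apply, sum_add_distrib, sum_pi_single', mem_univ, if_true] at hf
  omega

theorem exists_eq_single_of_sum_eq_one {m : Type*} [Fintype m] [DecidableEq m] {f : m → ℕ}
    (hf : ∑ i, f i = 1) : ∃ a, f = Pi.single a 1 := by
  obtain ⟨a, g, rfl, hg⟩ := exists_eq_single_add_of_sum_eq_succ hf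
  have hg0 : g = 0 := funext fun i => sum_eq_zero_iff.1 hg i (mem_univ i)
  exact ⟨a, by rw [hg0, add_zero]⟩

theorem exists_eq_single_add_single_of_sum_eq_two {m : Type*} [Fintype m] [DecidableEq m]
    {f : m → ℕ} (hf : ∑ i, f i = 2) : ∃ a b, f = Pi.single a 1 + Pi.single b 1 := by
  obtain ⟨a, g, rfl, hg⟩ := exists_eq_single_add_of_sum_eq_succ hf
  obtain ⟨b, rfl⟩ := exists_eq_single_of_sum_eq_one hg
  exact ⟨a, b, rfl⟩

theorem sub_single_add_single {m : Type*} [DecidableEq m] {A : Matrix m m ℕ} {i j : m}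
    (h : A i j ≠ 0) : A - Matrix.single i j 1 + Matrix.single i j 1 = A := by
  ext r s
  simp only [Matrix.add_apply, Matrix.sub_apply, Matrix.single_apply]
  split_ifs with hrs
  · obtain ⟨rfl, rfl⟩ := hrs
    omega
  · simp

variable {m : Type*} [Fintype m] [DecidableEq m]

theorem sum_row_add_single (A : Matrix m m ℕ) (i j r : m) :
    ∑ s, (A + Matrix.single i j 1 : Matrix m m ℕ) r s = ∑ s, A r s + (if r = i then 1 else 0) := by
  simp [sum_add_distrib, Matrix.single_apply, ite_and, eq_comm]

theorem sum_col_add_single (A : Matrix m m ℕ) (i j s : m) :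
    ∑ r, (A + Matrix.single i j 1 : Matrix m m ℕ) r s = ∑ r, A r s + (if s = j then 1 else 0) := by
  simp [sum_add_distrib, Matrix.single_apply, ite_and, eq_comm]

theorem sum_mul_permanent_sub_single (A : Matrix m m ℕ) (i : m) :
    ∑ j, A i j * (A - Matrix.single i j 1).permanent + A.permanent =
      (∑ j, A i j) * A.permanent := by
  have term (j : m) : A i j * (A - Matrix.single i j 1).permanent +
      A i j * (A.updateRow i (Pi.single j 1)).permanent = A i j * A.permanent := by
    rcases eq_or_ne (A i j) 0 with hj | hj
    · simp [hj]
    have hrow : (A - Matrix.single i j 1).updateRow i (Pi.single j 1) =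
        A.updateRow i (Pi.single j 1) := by
      ext r s
      rcases eq_or_ne r i with rfl | hr
      · simp
      · simp [hr, hr.symm]
    rw [← mul_add, ← hrow, ← permanent_add_single, sub_single_add_single hj]
  rw [sum_mul, ← sum_congr rfl fun j _ => term j, sum_add_distrib,
    ← permanent_updateRow_eq_sum, Matrix.updateRow_eq_self]

theorem sum_row_mul_le_permanent {A : Matrix m m ℕ} {i : m} {g : ℝ}
    (h : ∀ j, A i j ≠ 0 → g ≤ (A - Matrix.single i j 1).permanent) :
    (∑ j, A i j : ℕ) * g ≤ ((∑ j, A i j : ℕ) - 1) * (A.permanent : ℝ) := by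
  have identity : ∑ j, (A i j : ℝ) * (A - Matrix.single i j 1).permanent + A.permanent =
      (∑ j, A i j : ℕ) * (A.permanent : ℝ) := by
    exact_mod_cast sum_mul_permanent_sub_single A i
  have bound : ∑ j, (A i j : ℝ) * g ≤
      ∑ j, (A i j : ℝ) * (A - Matrix.single i j 1).permanent := by
    refine sum_le_sum fun j _ => ?_
    rcases eq_or_ne (A i j) 0 with hj | hj
    · simp [hj]
    · exact mul_le_mul_of_nonneg_left (h j hj) (Nat.cast_nonneg _)
  rw [← sum_mul, ← Nat.cast_sum] at bound
  linarith

theorem IsCubic.three_mul_le_two_mul_permanent {A : Matrix m m ℕ} (hA : IsCubic A) (i : m) {g : ℝ}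
    (h : ∀ B : Matrix m m ℕ, ∀ i j, IsCubic (B + Matrix.single i j 1) → g ≤ B.permanent) :
    3 * g ≤ 2 * A.permanent := by
  have average := sum_row_mul_le_permanent (A := A) (i := i) fun j hj =>
    h _ i j (by rwa [sub_single_add_single hj])
  rw [hA.1 i] at average
  norm_num at average
  linarith

variable {n : ℕ} {A : Matrix (Fin (n + 2)) (Fin (n + 2)) ℕ} {i₀ j₀ a : Fin (n + 2)} {g : ℝ}

theorem sum_row_succAbove_of_isCubic (hA : IsCubic (A + Matrix.single i₀ j₀ 1))
    (i : Fin (n + 2)) :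
    A i j₀ + ∑ l, A i (j₀.succAbove l) + (if i = i₀ then 1 else 0) = 3 := by
  rw [← Fin.sum_univ_succAbove (A i) j₀, ← sum_row_add_single A i₀ j₀, hA.1]

theorem sum_col_succAbove_of_isCubic (hA : IsCubic (A + Matrix.single i₀ j₀ 1))
    (l : Fin (n + 1)) : ∑ i, A i (j₀.succAbove l) = 3 := by
  rw [← hA.2 (j₀.succAbove l), sum_col_add_single, if_neg (Fin.succAbove_ne _ _), add_zero]

theorem le_permanent_of_double_entry (hA : IsCubic (A + Matrix.single i₀ j₀ 1))
    (hcol : (fun i => A i j₀) = Pi.single a 1 + Pi.single a 1)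
    (hg : ∀ B : Matrix (Fin (n + 1)) (Fin (n + 1)) ℕ, ∀ i j,
      IsCubic (B + Matrix.single i j 1) → g ≤ B.permanent) :
    4 * g ≤ 3 * A.permanent := by
  set M := A.submatrix a.succAbove j₀.succAbove
  have permanent_eq : (A.permanent : ℝ) = 2 * M.permanent := by
    rw [permanent_of_col_eq_single_add_single A hcol]
    push_cast
    ring
  have nonneg : (0 : ℝ) ≤ M.permanent := Nat.cast_nonneg _
  suffices g ≤ M.permanent by linarith
  have col_apply (i) : A i j₀ = if i = a then 2 else 0 := by
    rw [congrFun hcol i]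
    split_ifs with hi <;> simp [hi]
  have row_sum_M (i) : ∑ l, M i l + (if a.succAbove i = i₀ then 1 else 0) = 3 := by
    simpa [M, col_apply] using sum_row_succAbove_of_isCubic hA (a.succAbove i)
  have col_sum (l) : A a (j₀.succAbove l) + ∑ i, M i l = 3 := by
    rw [← sum_col_succAbove_of_isCubic hA l, Fin.sum_univ_succAbove _ a]
    rfl
  have row_sum_a := sum_row_succAbove_of_isCubic hA a
  rw [col_apply, if_pos rfl] at row_sum_a
  rcases Fin.eq_self_or_eq_succAbove a i₀ with rfl | ⟨i₁, rfl⟩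
  · have row_a_eq_zero : ∑ l, A i₀ (j₀.succAbove l) = 0 := by simpa using row_sum_a
    have hM : IsCubic M :=
      ⟨fun i => by simpa using row_sum_M i, fun l => by
        simpa [sum_eq_zero_iff.1 row_a_eq_zero l (mem_univ l)] using col_sum l⟩
    linarith [hM.three_mul_le_two_mul_permanent 0 hg]
  · have row_a_eq_one : ∑ l, A a (j₀.succAbove l) = 1 := by
      rw [if_neg (Fin.succAbove_ne a i₁).symm] at row_sum_a
      omega
    obtain ⟨l₁, hl₁⟩ := exists_eq_single_of_sum_eq_one row_a_eq_one
    refine hg M i₁ l₁ ⟨fun i => ?_, fun l => ?_⟩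
    · rw [sum_row_add_single, ← row_sum_M i]
      simp only [(Fin.succAbove_right_injective).eq_iff]
    · rw [sum_col_add_single, ← col_sum l, congrFun hl₁ l, Pi.single_apply, add_comm]

theorem exists_sum_row_mergeRows {k : Fin (n + 1)} (hA : IsCubic (A + Matrix.single i₀ j₀ 1))
    (hcol : (fun i => A i j₀) = Pi.single a 1 + Pi.single (a.succAbove k) 1) :
    ∃ i₁, ∀ i, ∑ l, mergeRows A a k j₀ i l + (if i = i₁ then 1 else 0) =
      3 + if i = k then 1 else 0 := by
  let t (i : Fin (n + 2)) : ℕ := if i = i₀ then 1 else 0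
  have row_sum_a : ∑ l, A a (j₀.succAbove l) + t a = 2 := by
    have : A a j₀ + _ + t a = 3 := sum_row_succAbove_of_isCubic hA a
    simp only [congrFun hcol a, Pi.add_apply, Pi.single_eq_same,
      Pi.single_eq_of_ne (Fin.succAbove_ne a k).symm] at this
    omega
  have row_sum (i) : (if i = k then 1 else 0) + ∑ l, A (a.succAbove i) (j₀.succAbove l) +
      t (a.succAbove i) = 3 := by
    rw [← sum_row_succAbove_of_isCubic hA (a.succAbove i), congrFun hcol]
    simp [t, Pi.single_apply]
  have row_sum_mergeRows (i) : ∑ l, mergeRows A a k j₀ i l +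
      (t (a.succAbove i) + if i = k then t a else 0) = 3 + if i = k then 1 else 0 := by
    rcases eq_or_ne i k with rfl | hi
    · simp only [mergeRows_self, sum_add_distrib, if_true, ← row_sum i]
      omega
    · simp only [mergeRows_of_ne A a k j₀ hi, ← row_sum i, if_neg hi]
      omega
  rcases Fin.eq_self_or_eq_succAbove a i₀ with rfl | ⟨i₁, rfl⟩
  · exact ⟨k, fun i => by simpa [t] using row_sum_mergeRows i⟩
  · exact ⟨i₁, fun i => by simpa [t] using row_sum_mergeRows i⟩

-- The merged row has sum 3 or 4, and `hg` applies once any of its entries is lowered. Averaging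
-- over the row gives the factor `4 / 3` from a row of sum 4, and `3 / 2` from one of sum 3.
theorem le_permanent_of_two_entries {k : Fin (n + 1)}
    (hA : IsCubic (A + Matrix.single i₀ j₀ 1))
    (hcol : (fun i => A i j₀) = Pi.single a 1 + Pi.single (a.succAbove k) 1)
    (hg : ∀ B : Matrix (Fin (n + 1)) (Fin (n + 1)) ℕ, ∀ i j,
      IsCubic (B + Matrix.single i j 1) → g ≤ B.permanent) :
    4 * g ≤ 3 * A.permanent := by
  obtain ⟨i₁, row_sum⟩ := exists_sum_row_mergeRows hA hcol
  rw [permanent_eq_permanent_mergeRows hcol]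
  set B := mergeRows A a k j₀
  have col_sum (l) : ∑ i, B i l = 3 := by
    rw [sum_col_mergeRows, sum_col_succAbove_of_isCubic hA]
  have average := sum_row_mul_le_permanent (A := B) (i := k) (g := g) fun j hj => by
    refine hg _ i₁ j ⟨fun i => ?_, fun l => ?_⟩
    · have := row_sum i
      rw [← sub_single_add_single hj, sum_row_add_single] at this
      rw [sum_row_add_single]
      omega
    · rw [sum_col_add_single, ← sum_col_add_single _ k, sub_single_add_single hj, col_sum]
  have nonneg : (0 : ℝ) ≤ B.permanent := Nat.cast_nonneg _
  have row_sum_k := row_sum k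
  obtain hs | hs : ∑ l, B k l = 3 ∨ ∑ l, B k l = 4 := by split_ifs at row_sum_k <;> omega
  · rw [hs] at average
    norm_num at average
    linarith
  · rw [hs] at average
    norm_num at average
    exact average

theorem two_mul_pow_le_permanent {n : ℕ} {A : Matrix (Fin (n + 1)) (Fin (n + 1)) ℕ}
    {i j : Fin (n + 1)} (hA : IsCubic (A + Matrix.single i j 1)) :
    2 * (4 / 3 : ℝ) ^ n ≤ A.permanent := by
  induction n with
  | zero =>
    have entry := hA.1 i
    rw [sum_row_add_single, if_pos rfl, Fin.sum_univ_one, Fin.fin_one_eq_zero i] at entry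
    have entry_eq : A 0 0 = 2 := by omega
    simp [Matrix.permanent, entry_eq]
  | succ n ih =>
    have col_sum := hA.2 j
    rw [sum_col_add_single, if_pos rfl] at col_sum
    obtain ⟨a, b, hcol⟩ :=
      exists_eq_single_add_single_of_sum_eq_two (f := fun i => A i j) (by omega)
    suffices 4 * (2 * (4 / 3 : ℝ) ^ n) ≤ 3 * A.permanent by
      rw [pow_succ]
      linarith
    rcases Fin.eq_self_or_eq_succAbove a b with rfl | ⟨k, rfl⟩
    · exact le_permanent_of_double_entry hA hcol (fun _ _ _ => ih)
    · exact le_permanent_of_two_entries hA hcol (fun _ _ _ => ih)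

theorem IsCubic.three_mul_pow_le_permanent {m : Type*} [Fintype m] [DecidableEq m] {n : ℕ}
    (hm : Fintype.card m = n + 1) {A : Matrix m m ℕ} (hA : IsCubic A) :
    3 * (4 / 3 : ℝ) ^ n ≤ A.permanent := by
  let σ : Fin (n + 1) ≃ m := (Fintype.equivFinOfCardEq hm).symm
  have reindexed : IsCubic (A.submatrix σ σ) :=
    ⟨fun i => (σ.sum_comp fun j => A (σ i) j).trans (hA.1 _),
      fun j => (σ.sum_comp fun i => A i (σ j)).trans (hA.2 _)⟩
  have average := reindexed.three_mul_le_two_mul_permanent 0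
    fun _ _ _ => two_mul_pow_le_permanent
  rw [permanent_submatrix_equiv_self] at average
  linarith

end Voorhoeve

section Coloring

theorem card_le_card_mul_of_injective_prod {X Y Z : Type*} [Finite Y] {f : X → Y × Z}
    (hf : f.Injective) {t : Y → Finset Z} (ht : ∀ x, (f x).2 ∈ t (f x).1) {k : ℕ}
    (hk : ∀ y, #(t y) ≤ k) : Nat.card X ≤ Nat.card Y * k := by
  have := Fintype.ofFinite Y
  let g (x : X) : Σ y, t y := ⟨(f x).1, (f x).2, ht x⟩
  have hg : g.Injective := fun x x' h => hf <| by
    have h₂ := congrArg (fun p : Σ y, t y => (p.1, (p.2 : Z))) h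
    exact h₂
  calc Nat.card X ≤ Nat.card (Σ y, t y) := Nat.card_le_card_of_injective g hg
    _ = ∑ y, #(t y) := by simp
    _ ≤ Nat.card Y * k := by
      rw [Nat.card_eq_fintype_card]
      exact sum_le_card_nsmul univ _ k fun y _ => hk y

theorem card_coloring_le_prod_connectedComponent {V κ : Type*} [Finite V] [Finite κ]
    {G : SimpleGraph V} [Fintype G.ConnectedComponent] :
    Nat.card (G.Coloring κ) ≤
      ∏ c : G.ConnectedComponent, Nat.card ((G.induce c.supp).Coloring κ) := by
  rw [← Nat.card_pi]
  refine Nat.card_le_card_of_injective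
    (fun C c => C.comp (SimpleGraph.Embedding.induce c.supp).toHom) fun C C' h => ?_
  ext v
  exact DFunLike.congr_fun (congrFun h (G.connectedComponentMk v)) ⟨v, rfl⟩

variable {V κ : Type*} [Fintype κ] {G : SimpleGraph V}

theorem card_coloring_induce_insert_le [Finite V] {S : Set V} {K : Finset V}
    (hK : G.IsClique K) (hKS : ↑K ⊆ S) {d : V} (hd : ∀ v ∈ K, G.Adj d v) :
    Nat.card ((G.induce (insert d S)).Coloring κ) ≤
      Nat.card ((G.induce S).Coloring κ) * (Fintype.card κ - #K) := by
  classical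
  let inclusion : G.induce S →g G.induce (insert d S) :=
    (SimpleGraph.induceHomOfLE G (Set.subset_insert d S)).toHom
  let new : ↥(insert d S) := ⟨d, Set.mem_insert d S⟩
  let embed (v : K) : S := ⟨v, hKS v.2⟩
  let f (c : (G.induce (insert d S)).Coloring κ) : (G.induce S).Coloring κ × κ :=
    (c.comp inclusion, c new)
  refine card_le_card_mul_of_injective_prod (f := f)
    (t := fun c => univ \ univ.image fun v : K => c (embed v)) ?_ ?_ ?_
  · intro c c' h
    obtain ⟨h_old, h_new⟩ := Prod.ext_iff.1 h
    ext ⟨v, rfl | hv⟩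
    · exact h_new
    · exact DFunLike.congr_fun h_old ⟨v, hv⟩
  · intro c
    simp only [mem_sdiff, mem_univ, mem_image, true_and, not_exists]
    exact fun v hv => c.valid (v := new) (w := inclusion (embed v)) (hd v v.2) hv.symm
  · intro c
    have c_injective : Function.Injective fun v : K => c (embed v) := fun v w hvw => by
      by_contra hne
      exact c.valid (v := embed v) (w := embed w)
        (hK v.2 w.2 fun h => hne (Subtype.ext h)) hvw
    rw [card_sdiff_of_subset (subset_univ _), card_image_of_injective _ c_injective]
    simp

theorem card_coloring_induce_insert_le_of_adj [Finite V] {S : Set V} {a d : V} (ha : a ∈ S)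
    (hda : G.Adj d a) :
    Nat.card ((G.induce (insert d S)).Coloring κ) ≤
      Nat.card ((G.induce S).Coloring κ) * (Fintype.card κ - 1) := by
  simpa using card_coloring_induce_insert_le (G := G) (K := {a}) (d := d) (S := S)
    (by simp) (by simpa) (by simpa)

theorem card_coloring_induce_insert_le_of_triangle [Finite V] {S : Set V} {a b d : V}
    (ha : a ∈ S) (hb : b ∈ S) (hab : G.Adj a b) (hda : G.Adj d a) (hdb : G.Adj d b) :
    Nat.card ((G.induce (insert d S)).Coloring κ) ≤
      Nat.card ((G.induce S).Coloring κ) * (Fintype.card κ - 2) := by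
  classical
  rw [← card_pair hab.ne]
  exact card_coloring_induce_insert_le (by simp [hab]) (by simp [Set.insert_subset_iff, ha, hb])
    (by simp [hda, hdb])

-- An edge leaving `S` lies in a triangle. Either the triangle has one vertex outside `S`, which
-- has at most `#κ - 2` colours, or two, with at most `#κ - 1` and `#κ - 2` colours.
theorem exists_ssuperset_sq_card_coloring_le [Finite V] (hG : G.Connected)
    (triangle : ∀ a b, G.Adj a b → ∃ c, G.Adj a c ∧ G.Adj b c) {S : Set V} (hS : S.Nonempty)
    (hS' : S ≠ Set.univ) :
    ∃ T, S ⊂ T ∧ Nat.card ((G.induce T).Coloring κ) ^ 2 ≤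
      Nat.card ((G.induce S).Coloring κ) ^ 2 *
        ((Fintype.card κ - 1) * (Fintype.card κ - 2)) ^ (T.ncard - S.ncard) := by
  classical
  have two_le_one : Fintype.card κ - 2 ≤ Fintype.card κ - 1 := by omega
  obtain ⟨a, ha⟩ := hS
  obtain ⟨b, hb⟩ := (Set.ne_univ_iff_exists_notMem S).1 hS'
  obtain ⟨w⟩ := hG.preconnected a b
  obtain ⟨⟨⟨a, b⟩, hab⟩, -, ha, hb⟩ := w.exists_boundary_dart S ha hb
  obtain ⟨d, had, hbd⟩ := triangle a b hab
  by_cases hd : d ∈ S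
  · refine ⟨insert b S, Set.ssubset_insert hb, ?_⟩
    rw [Set.ncard_insert_of_notMem hb, Nat.add_sub_cancel_left, pow_one]
    calc _ ≤ (Nat.card ((G.induce S).Coloring κ) * (Fintype.card κ - 2)) ^ 2 :=
          Nat.pow_le_pow_left
            (card_coloring_induce_insert_le_of_triangle ha hd had hab.symm hbd) 2
      _ ≤ _ := by
          rw [mul_pow, sq (_ - 2)]
          gcongr
  · have hdb : d ∉ insert b S := by simp [hd, hbd.ne']
    refine ⟨insert d (insert b S), (Set.ssubset_insert hb).trans (Set.ssubset_insert hdb), ?_⟩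
    rw [Set.ncard_insert_of_notMem hdb, Set.ncard_insert_of_notMem hb, add_assoc,
      Nat.add_sub_cancel_left, ← mul_pow, ← mul_assoc]
    refine Nat.pow_le_pow_left ?_ 2
    exact (card_coloring_induce_insert_le_of_triangle (Set.mem_insert_of_mem b ha)
      (Set.mem_insert b S) hab had.symm hbd.symm).trans
      (Nat.mul_le_mul_right _ (card_coloring_induce_insert_le_of_adj ha hab.symm))

theorem sq_card_coloring_le_of_connected [Finite V] (hG : G.Connected)
    (triangle : ∀ a b, G.Adj a b → ∃ c, G.Adj a c ∧ G.Adj b c) :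
    Nat.card (G.Coloring κ) ^ 2 ≤
      Fintype.card κ ^ 2 * ((Fintype.card κ - 1) * (Fintype.card κ - 2)) ^ (Nat.card V - 1) := by
  set x := (Fintype.card κ - 1) * (Fintype.card κ - 2)
  let Good (S : Set V) : Prop := S.Nonempty ∧
    Nat.card ((G.induce S).Coloring κ) ^ 2 ≤ Fintype.card κ ^ 2 * x ^ (S.ncard - 1)
  obtain ⟨v⟩ := hG.nonempty
  have good_singleton : Good {v} := by
    refine ⟨Set.singleton_nonempty v, ?_⟩
    rw [Set.ncard_singleton, Nat.sub_self, pow_zero, mul_one, ← Nat.card_eq_fintype_card]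
    refine Nat.pow_le_pow_left (Nat.card_le_card_of_injective (fun c => c ⟨v, rfl⟩) ?_) 2
    rintro c c' h
    ext ⟨_, rfl⟩
    exact h
  obtain ⟨S, hS⟩ := (Set.toFinite {S | Good S}).exists_maximal ⟨_, good_singleton⟩
  have S_eq_univ : S = Set.univ := by
    by_contra hne
    obtain ⟨T, hST, hT⟩ := exists_ssuperset_sq_card_coloring_le (κ := κ) hG triangle hS.1.1 hne
    refine hS.not_prop_of_gt hST ⟨hS.1.1.mono hST.subset, hT.trans ?_⟩
    have S_pos := (Set.ncard_pos).2 hS.1.1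
    have S_le := Set.ncard_le_ncard hST.subset
    calc _ ≤ Fintype.card κ ^ 2 * x ^ (S.ncard - 1) * x ^ (T.ncard - S.ncard) :=
          Nat.mul_le_mul_right _ hS.1.2
      _ = _ := by
          rw [mul_assoc, ← pow_add]
          congr 2
          omega
  have bound := hS.1.2
  rw [S_eq_univ, Set.ncard_univ] at bound
  refine le_trans (Nat.pow_le_pow_left ?_ 2) bound
  refine Nat.card_le_card_of_injective
    (fun c => c.comp (SimpleGraph.induceUnivIso G).toEmbedding.toHom) fun c c' h => ?_
  ext v
  exact DFunLike.congr_fun h ⟨v, trivial⟩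

end Coloring

section RegularFamily

/-- A family of finsets is *regular* of degree `k` if its incidence graph is `k`-regular away from
the points lying in no member: every member has `k` points, and every point of a member lies in
exactly `k` members. -/
structure IsRegularFamily {ι α : Type*} [Fintype ι] [DecidableEq α] (e : ι → Finset α) (k : ℕ) :
    Prop where
  card_eq : ∀ i, #(e i) = k
  degree_eq : ∀ i, ∀ v ∈ e i, #{j | v ∈ e j} = k

/-- A transversal of `e`: a system of distinct representatives of the members of `e`. -/
abbrev Transversal {ι α : Type*} (e : ι → Finset α) : Type _ :=
  {r : ι ↪ α // ∀ i, r i ∈ e i}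

/-- A proper edge colouring of the incidence graph of `e` in which every vertex on the side of the
index type `ι` sees each of the `k` colours exactly once. It is encoded by its colour classes,
which are matchings `ρ l : ι ↪ α`. -/
abbrev EdgeColoring {ι α : Type*} [DecidableEq α] (e : ι → Finset α) (k : ℕ) : Type _ :=
  {ρ : Fin k → ι ↪ α // ∀ i, (fun l => ρ l i).Injective ∧ univ.image (fun l => ρ l i) = e i}

/-- Adds the matching `r` as a new first colour class to a colouring of the remaining edges. -/
def EdgeColoring.cons {ι α : Type*} [DecidableEq α] {e : ι → Finset α} {k : ℕ} (r : Transversal e)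
    (ρ : EdgeColoring (fun i => (e i).erase (r.1 i)) k) : EdgeColoring e (k + 1) := by
  refine ⟨Fin.cons r.1 ρ.1, fun i => ?_⟩
  have cons_apply : (fun l => (Fin.cons r.1 ρ.1 : Fin (k + 1) → ι ↪ α) l i) =
      Fin.cons (r.1 i) fun l => ρ.1 l i := by
    ext l
    cases l using Fin.cases <;> rfl
  have range_eq : Set.range (fun l => ρ.1 l i) = (e i).erase (r.1 i) := by
    have image_eq : univ.image (fun l => ρ.1 l i) = (e i).erase (r.1 i) := (ρ.2 i).2
    rw [← image_eq, coe_image, coe_univ, Set.image_univ]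
  rw [cons_apply, Fin.cons_injective_iff, range_eq, ← coe_inj, coe_image, coe_univ,
    Set.image_univ, Fin.range_cons, range_eq, ← coe_insert, insert_erase (r.2 i)]
  exact ⟨⟨by simp, (ρ.2 i).1⟩, rfl⟩

variable {ι α : Type*} [Fintype ι] [DecidableEq α] {e : ι → Finset α} {k : ℕ}

theorem IsRegularFamily.nonempty_transversal (he : IsRegularFamily e (k + 1)) :
    Nonempty (Transversal e) := by
  obtain ⟨r, hr, hr_mem⟩ := (all_card_le_biUnion_card_iff_exists_injective e).1 fun s => by
    refine Nat.le_of_mul_le_mul_right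
      (card_mul_le_card_mul (fun i v => v ∈ e i) (m := k + 1) (n := k + 1) ?_ ?_) k.succ_pos
    · intro i hi
      rw [← he.card_eq i]
      exact card_le_card fun v hv => mem_filter.2 ⟨mem_biUnion.2 ⟨i, hi, hv⟩, hv⟩
    · intro v hv
      obtain ⟨i, -, hv⟩ := mem_biUnion.1 hv
      rw [← he.degree_eq i v hv]
      exact card_le_card (filter_subset_filter _ (subset_univ s))
  exact ⟨⟨r, hr⟩, hr_mem⟩

theorem IsRegularFamily.card_biUnion_eq (he : IsRegularFamily e (k + 1)) :
    #(univ.biUnion e) = Fintype.card ι := by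
  refine (Nat.eq_of_mul_eq_mul_right k.succ_pos
    (card_mul_eq_card_mul (fun i v => v ∈ e i) ?_ ?_)).symm
  · intro i _
    refine Eq.trans (congrArg card ?_) (he.card_eq i)
    ext v
    simpa [bipartiteAbove] using fun hv => ⟨i, hv⟩
  · intro v hv
    obtain ⟨i, -, hv⟩ := mem_biUnion.1 hv
    exact he.degree_eq i v hv

theorem IsRegularFamily.exists_eq_of_mem (he : IsRegularFamily e (k + 1)) (r : Transversal e)
    {i : ι} {v : α} (hv : v ∈ e i) : ∃ j, r.1 j = v := by
  have image_eq : univ.map r.1 = univ.biUnion e :=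
    eq_of_subset_of_card_le
      (fun w hw => by
        obtain ⟨j, -, rfl⟩ := mem_map.1 hw
        exact mem_biUnion.2 ⟨j, mem_univ j, r.2 j⟩)
      (by rw [he.card_biUnion_eq, card_map, card_univ])
  have hv : v ∈ univ.map r.1 := image_eq ▸ mem_biUnion.2 ⟨i, mem_univ i, hv⟩
  simpa using hv

theorem IsRegularFamily.erase (he : IsRegularFamily e (k + 1)) (r : Transversal e) :
    IsRegularFamily (fun i => (e i).erase (r.1 i)) k := by
  classical
  refine ⟨fun i => by rw [card_erase_of_mem (r.2 i), he.card_eq, Nat.add_sub_cancel], ?_⟩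
  intro i v hv
  have hv := mem_of_mem_erase hv
  obtain ⟨j, rfl⟩ := he.exists_eq_of_mem r hv
  have filter_eq : ({l | r.1 j ∈ (e l).erase (r.1 l)} : Finset ι) =
      ({l | r.1 j ∈ e l} : Finset ι).erase j := by
    ext l
    simp [eq_comm]
  rw [filter_eq, card_erase_of_mem (by simpa using r.2 j), he.degree_eq i _ hv,
    Nat.add_sub_cancel]

theorem IsRegularFamily.nonempty_edgeColoring (he : IsRegularFamily e k) :
    Nonempty (EdgeColoring e k) := by
  induction k generalizing e with
  | zero =>
    refine ⟨⟨Fin.elim0, fun i => ⟨fun l => l.elim0, ?_⟩⟩⟩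
    rw [card_eq_zero.1 (he.card_eq i)]
    rfl
  | succ k ih =>
    obtain ⟨r⟩ := he.nonempty_transversal
    obtain ⟨ρ⟩ := ih (he.erase r)
    exact ⟨EdgeColoring.cons r ρ⟩

theorem IsRegularFamily.card_transversal_le_card_edgeColoring [Finite α]
    (he : IsRegularFamily e (k + 1)) :
    Nat.card (Transversal e) ≤ Nat.card (EdgeColoring e (k + 1)) := by
  have mem (ρ : EdgeColoring e (k + 1)) (i : ι) : ρ.1 0 i ∈ e i := by
    rw [← (ρ.2 i).2]
    exact mem_image_of_mem _ (mem_univ 0)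
  refine Nat.card_le_card_of_surjective (fun ρ => ⟨ρ.1 0, mem ρ⟩) fun r => ?_
  obtain ⟨ρ⟩ := (he.erase r).nonempty_edgeColoring
  exact ⟨EdgeColoring.cons r ρ, rfl⟩

theorem permanent_le_card_transversal [DecidableEq ι] [Finite α] {U : Finset α} (b : ι ≃ U) :
    (Matrix.of fun j i => if (b j : α) ∈ e i then 1 else 0 : Matrix ι ι ℕ).permanent ≤
      Nat.card (Transversal e) := by
  have permanent_eq : (Matrix.of fun j i => if (b j : α) ∈ e i then 1 else 0 :
      Matrix ι ι ℕ).permanent = Nat.card {σ : Equiv.Perm ι // ∀ i, (b (σ i) : α) ∈ e i} := by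
    simp [Matrix.permanent, prod_ite_zero, Fintype.card_subtype]
  rw [permanent_eq]
  refine Nat.card_le_card_of_injective (fun σ => ⟨(σ.1.toEmbedding.trans b.toEmbedding).trans
    (Function.Embedding.subtype _), σ.2⟩) fun σ τ h => ?_
  have apply_eq (i) : b (σ.1 i) = b (τ.1 i) :=
    Subtype.ext (DFunLike.congr_fun (congrArg Subtype.val h) i)
  exact Subtype.ext (Equiv.ext fun i => b.injective (apply_eq i))

theorem IsRegularFamily.three_mul_pow_le_card_transversal [Finite α] (he : IsRegularFamily e 3)
    {n : ℕ} (hn : Fintype.card ι = n + 1) : 3 * (4 / 3 : ℝ) ^ n ≤ Nat.card (Transversal e) := by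
  classical
  set U := univ.biUnion e
  have card_U : #U = Fintype.card ι := he.card_biUnion_eq
  let b : ι ≃ U := Fintype.equivOfCardEq (by rw [Fintype.card_coe, card_U])
  refine (IsCubic.three_mul_pow_le_permanent hn ⟨fun j => ?_, fun i => ?_⟩).trans
    (Nat.cast_le.2 (permanent_le_card_transversal b))
  · obtain ⟨i, -, hi⟩ := mem_biUnion.1 (b j).2
    simpa using he.degree_eq i _ hi
  · rw [← he.card_eq i]
    simp only [Matrix.of_apply, sum_boole, Nat.cast_id]
    refine card_nbij (fun j => (b j : α)) (fun j hj => by simpa using hj) ?_ ?_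
    · exact (Subtype.val_injective.comp b.injective).injOn
    · intro v hv
      have hv_mem : v ∈ U := mem_biUnion.2 ⟨i, mem_univ i, hv⟩
      exact ⟨b.symm ⟨v, hv_mem⟩, by simpa using hv, by simp⟩

end RegularFamily

section IntersectionGraph

/-- The intersection graph (line graph) of a family of finsets. -/
def intersectionGraph {ι α : Type*} (e : ι → Finset α) : SimpleGraph ι where
  Adj i j := i ≠ j ∧ ¬Disjoint (e i) (e j)
  symm := ⟨fun _ _ h => ⟨h.1.symm, fun h' => h.2 h'.symm⟩⟩
  loopless := ⟨fun _ h => h.1 rfl⟩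

theorem intersectionGraph_adj_of_mem {ι α : Type*} {e : ι → Finset α} {i j : ι} {v : α}
    (hij : i ≠ j) (hi : v ∈ e i) (hj : v ∈ e j) : (intersectionGraph e).Adj i j :=
  ⟨hij, not_disjoint_iff.2 ⟨v, hi, hj⟩⟩

theorem induce_intersectionGraph {ι α : Type*} (e : ι → Finset α) (s : Set ι) :
    (intersectionGraph e).induce s = intersectionGraph fun i : s => e i := by
  ext i j
  exact and_congr_left' (not_congr Subtype.ext_iff.symm)

theorem card_pi_transversal_le {ι α : Type*} [Finite ι] [Finite α] (e : ι → Finset α) :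
    Nat.card (∀ c : (intersectionGraph e).ConnectedComponent,
      Transversal fun i : c.supp => e i) ≤ Nat.card (Transversal e) := by
  let glue (r : ∀ c : (intersectionGraph e).ConnectedComponent,
      Transversal fun i : c.supp => e i) (i : ι) : α :=
    (r ((intersectionGraph e).connectedComponentMk i)).1 ⟨i, rfl⟩
  have glue_apply (r) {c : (intersectionGraph e).ConnectedComponent} {i : ι} (hi : i ∈ c.supp) :
      glue r i = (r c).1 ⟨i, hi⟩ := by
    obtain rfl := hi
    rfl
  have glue_mem (r i) : glue r i ∈ e i := (r _).2 _
  have glue_injective (r) : (glue r).Injective := fun i j hij => by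
    by_contra hne
    have adj := intersectionGraph_adj_of_mem hne (glue_mem r i) (hij ▸ glue_mem r j)
    have hj : j ∈ ((intersectionGraph e).connectedComponentMk i).supp :=
      (SimpleGraph.ConnectedComponent.connectedComponentMk_eq_of_adj adj).symm
    rw [glue_apply r hj] at hij
    exact hne (congrArg Subtype.val ((r _).1.injective hij))
  refine Nat.card_le_card_of_injective
    (fun r => (⟨⟨glue r, glue_injective r⟩, glue_mem r⟩ : Transversal e)) fun r r' h => ?_
  ext c i : 4
  have glue_eq := DFunLike.congr_fun (congrArg Subtype.val h) i.1
  exact ((glue_apply r i.2).symm.trans glue_eq).trans (glue_apply r' i.2)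

variable {ι α : Type*} [Fintype ι] [DecidableEq α] {e : ι → Finset α} {k : ℕ}

theorem IsRegularFamily.exists_adj_adj (he : IsRegularFamily e (k + 3)) {i j : ι}
    (hij : (intersectionGraph e).Adj i j) :
    ∃ l, (intersectionGraph e).Adj i l ∧ (intersectionGraph e).Adj j l := by
  classical
  obtain ⟨v, hi, hj⟩ := not_disjoint_iff.1 hij.2
  have lt_degree : #{i, j} < #{l | v ∈ e l} := by
    rw [he.degree_eq i v hi]
    exact (card_le_two).trans_lt (by omega)
  obtain ⟨l, hl, hl_ne⟩ := exists_mem_notMem_of_card_lt_card lt_degree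
  have hl : v ∈ e l := by simpa using hl
  have hl_ne : l ≠ i ∧ l ≠ j := by simpa using hl_ne
  exact ⟨l, intersectionGraph_adj_of_mem hl_ne.1.symm hi hl,
    intersectionGraph_adj_of_mem hl_ne.2.symm hj hl⟩

theorem IsRegularFamily.restrict_supp (he : IsRegularFamily e k)
    (c : (intersectionGraph e).ConnectedComponent) [Fintype c.supp] :
    IsRegularFamily (fun i : c.supp => e i) k := by
  refine ⟨fun i => he.card_eq i, fun i v hi => ?_⟩
  rw [← he.degree_eq i v hi, ← card_map (Function.Embedding.subtype (· ∈ c.supp))]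
  congr 1
  ext j
  simp only [mem_map, mem_filter, mem_univ, true_and, Function.Embedding.subtype_apply,
    Subtype.exists, exists_and_left, exists_prop, exists_eq_right_right, and_iff_left_iff_imp]
  intro hj
  rcases eq_or_ne (i : ι) j with rfl | hij
  · exact i.2
  · exact c.mem_supp_of_adj_mem_supp i.2 (intersectionGraph_adj_of_mem hij hi hj)

theorem IsRegularFamily.sq_card_coloring_le_of_intersectionGraph_connected [Finite α]
    (he : IsRegularFamily e 3) (hconn : (intersectionGraph e).Connected) :
    (Nat.card ((intersectionGraph e).Coloring (Fin 3)) : ℝ) ^ 2 ≤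
      (9 / 8) ^ Fintype.card ι * (Nat.card (Transversal e) : ℝ) ^ 2 := by
  have := hconn.nonempty
  obtain ⟨n, hn⟩ := Nat.exists_eq_succ_of_ne_zero (Fintype.card_ne_zero (α := ι))
  have coloring_le : (Nat.card ((intersectionGraph e).Coloring (Fin 3)) : ℝ) ^ 2 ≤ 9 * 2 ^ n := by
    have := sq_card_coloring_le_of_connected (κ := Fin 3) hconn
      fun _ _ => he.exists_adj_adj (k := 0)
    rw [Nat.card_eq_fintype_card (α := ι), hn] at this
    exact_mod_cast this
  have le_transversal := he.three_mul_pow_le_card_transversal hn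
  calc (Nat.card ((intersectionGraph e).Coloring (Fin 3)) : ℝ) ^ 2
      ≤ 9 * 2 ^ n := coloring_le
    _ = (9 / 8) ^ n * (3 * (4 / 3) ^ n) ^ 2 := by
        rw [mul_pow, ← pow_mul, mul_comm n, pow_mul, mul_left_comm, ← mul_pow]
        norm_num
    _ ≤ (9 / 8) ^ Fintype.card ι * (Nat.card (Transversal e) : ℝ) ^ 2 := by
        gcongr
        · norm_num
        · omega

theorem IsRegularFamily.sq_card_coloring_le [Finite α] (he : IsRegularFamily e 3) :
    (Nat.card ((intersectionGraph e).Coloring (Fin 3)) : ℝ) ^ 2 ≤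
      (9 / 8) ^ Fintype.card ι * (Nat.card (Transversal e) : ℝ) ^ 2 := by
  classical
  set G := intersectionGraph e
  have component (c : G.ConnectedComponent) :
      (Nat.card ((G.induce c.supp).Coloring (Fin 3)) : ℝ) ^ 2 ≤
        (9 / 8) ^ Fintype.card c.supp *
          (Nat.card (Transversal fun i : c.supp => e i) : ℝ) ^ 2 := by
    have connected : (G.induce c.supp).Connected := c.connected_toSimpleGraph
    rw [induce_intersectionGraph] at connected ⊢
    exact (he.restrict_supp c).sq_card_coloring_le_of_intersectionGraph_connected connected
  have sum_card : ∑ c : G.ConnectedComponent, Fintype.card c.supp = Fintype.card ι := by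
    rw [← Fintype.card_sigma]
    exact Fintype.card_congr (Equiv.sigmaFiberEquiv G.connectedComponentMk)
  calc (Nat.card (G.Coloring (Fin 3)) : ℝ) ^ 2
      ≤ (∏ c : G.ConnectedComponent, (Nat.card ((G.induce c.supp).Coloring (Fin 3)) : ℝ)) ^ 2 := by
        gcongr
        exact_mod_cast card_coloring_le_prod_connectedComponent
    _ ≤ ∏ c : G.ConnectedComponent, ((9 / 8) ^ Fintype.card c.supp *
          (Nat.card (Transversal fun i : c.supp => e i) : ℝ) ^ 2) := by
        rw [← prod_pow]
        exact prod_le_prod (fun _ _ => by positivity) fun c _ => component c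
    _ = (9 / 8) ^ Fintype.card ι * (Nat.card (∀ c : G.ConnectedComponent,
          Transversal fun i : c.supp => e i) : ℝ) ^ 2 := by
        rw [prod_mul_distrib, prod_pow_eq_pow_sum, sum_card, prod_pow, Nat.card_pi, Nat.cast_prod]
    _ ≤ (9 / 8) ^ Fintype.card ι * (Nat.card (Transversal e) : ℝ) ^ 2 := by
        gcongr
        exact card_pi_transversal_le e

end IntersectionGraph

section DoubleCounting

/-- A labelling of the members of `e` by `d` labels each of whose classes partitions the points. -/
abbrev OneFactorization {ι α : Type*} (e : ι → Finset α) (d : ℕ) : Type _ :=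
  {c : ι → Fin d // ∀ v k, ∃! i, v ∈ e i ∧ c i = k}

theorem card_filter_mem_of_oneFactorization {ι α : Type*} [Fintype ι] [DecidableEq α]
    {e : ι → Finset α} {d : ℕ} (c : OneFactorization e d) (v : α) : #{i | v ∈ e i} = d := by
  have card_class (k : Fin d) : #{i ∈ ({i | v ∈ e i} : Finset ι) | c.1 i = k} = 1 := by
    obtain ⟨i, hi, unique⟩ := c.2 v k
    rw [filter_filter]
    exact card_eq_one.2 ⟨i, by ext j; simpa using ⟨unique j, fun h => h ▸ hi⟩⟩
  rw [card_eq_sum_card_fiberwise (f := c.1) (t := univ) (fun _ _ => mem_coe.2 (mem_univ _)),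
    sum_congr rfl fun k _ => card_class k]
  simp

theorem card_oneFactorization_le_card_coloring {ι α : Type*} [Finite ι] (e : ι → Finset α)
    (d : ℕ) : Nat.card (OneFactorization e d) ≤
      Nat.card ((intersectionGraph e).Coloring (Fin d)) := by
  have valid (c : OneFactorization e d) {i j} (hij : (intersectionGraph e).Adj i j) :
      c.1 i ≠ c.1 j := fun hc => by
    obtain ⟨v, hi, hj⟩ := not_disjoint_iff.1 hij.2
    exact hij.1 ((c.2 v (c.1 j)).unique ⟨hi, hc⟩ ⟨hj, rfl⟩)
  exact Nat.card_le_card_of_injective (fun c => SimpleGraph.Coloring.mk c.1 (valid c))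
    fun c c' h => Subtype.ext (congrArg DFunLike.coe h)

theorem sq_card_oneFactorization_le {ι α : Type*} [Fintype ι] [Finite α] [DecidableEq α]
    {e : ι → Finset α} (he : ∀ i, #(e i) = 3) :
    (Nat.card (OneFactorization e 3) : ℝ) ^ 2 ≤
      (9 / 8) ^ Fintype.card ι * (Nat.card (EdgeColoring e 3) : ℝ) ^ 2 := by
  rcases isEmpty_or_nonempty (OneFactorization e 3) with hempty | ⟨⟨c⟩⟩
  · rw [Nat.card_of_isEmpty, Nat.cast_zero, zero_pow two_ne_zero]
    positivity
  have regular : IsRegularFamily e 3 :=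
    ⟨he, fun _ v _ => card_filter_mem_of_oneFactorization c v⟩
  calc (Nat.card (OneFactorization e 3) : ℝ) ^ 2
      ≤ (Nat.card ((intersectionGraph e).Coloring (Fin 3)) : ℝ) ^ 2 := by
        gcongr
        exact card_oneFactorization_le_card_coloring e 3
    _ ≤ (9 / 8) ^ Fintype.card ι * (Nat.card (Transversal e) : ℝ) ^ 2 :=
        regular.sq_card_coloring_le
    _ ≤ (9 / 8) ^ Fintype.card ι * (Nat.card (EdgeColoring e 3) : ℝ) ^ 2 := by
        gcongr
        exact regular.card_transversal_le_card_edgeColoring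

theorem card_oneFactorization_le {ι α : Type*} [Fintype ι] [Finite α] [DecidableEq α]
    {e : ι → Finset α} (he : ∀ i, #(e i) = 3) :
    (Nat.card (OneFactorization e 3) : ℝ) ≤
      (3 / 2 ^ (3 / 2 : ℝ)) ^ Fintype.card ι * Nat.card (EdgeColoring e 3) := by
  have sq_const : (3 / 2 ^ (3 / 2 : ℝ) : ℝ) ^ 2 = 9 / 8 := by
    rw [div_pow, ← Real.rpow_natCast, ← Real.rpow_natCast, ← Real.rpow_mul (by norm_num)]
    norm_num
  refine le_of_sq_le_sq ?_ (by positivity)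
  rw [mul_pow, ← pow_mul, mul_comm _ 2, pow_mul, sq_const]
  exact sq_card_oneFactorization_le he

variable {n d : ℕ} {W P : Finset (Finset (Fin n))}

theorem IsOneFactor.card_mul_eq (hP : IsOneFactor W P) (hW : ∀ e ∈ W, #e = d) : #P * d = n := by
  have := card_mul_eq_card_mul (s := P) (t := univ) (fun e v => v ∈ e) (m := d) (n := 1)
    (fun e he => by simpa [bipartiteAbove] using hW e (hP.1 he))
    (fun v _ => by
      obtain ⟨e, he, unique⟩ := hP.2 v
      exact card_eq_one.2 ⟨e, by ext f; simpa [bipartiteBelow] using ⟨unique f, fun h => h ▸ he⟩⟩)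
  simpa using this

/-- The hyperedges of a `d`-tuple of 1-factors, each labelled by the index of the 1-factor it comes
from. -/
abbrev LabelledEdge (p : Fin d → {P // IsOneFactor W P}) : Type :=
  {x : Fin d × Finset (Fin n) // x.2 ∈ (p x.1).1}

theorem card_labelledEdge (hd : 0 < d) (hW : ∀ e ∈ W, #e = d)
    (p : Fin d → {P // IsOneFactor W P}) : Nat.card (LabelledEdge p) = n := by
  have hp (k) : #(p k).1 * d = n := (p k).2.card_mul_eq hW
  refine Nat.eq_of_mul_eq_mul_right hd ?_
  rw [Nat.card_congr (Equiv.subtypeProdEquivSigmaSubtype fun k f => f ∈ (p k).1), Nat.card_sigma,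
    sum_mul]
  simp only [Nat.card_eq_fintype_card, Fintype.card_coe, hp, sum_const, card_univ,
    Fintype.card_fin, smul_eq_mul, mul_comm]

/-- The family of hyperedges obtained by enumerating a `d`-tuple of 1-factors, with its
one-factorization. -/
def LabelledEdge.toOneFactorization (p : Fin d → {P // IsOneFactor W P})
    (ψ : Fin n ≃ LabelledEdge p) :
    Σ e : Fin n → W, OneFactorization (fun i => (e i : Finset (Fin n))) d :=
  ⟨fun i => ⟨(ψ i).1.2, (p _).2.1 (ψ i).2⟩, fun i => (ψ i).1.1, fun v k => by
    obtain ⟨f, ⟨hf, hv⟩, unique⟩ := (p k).2.2 v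
    refine ⟨ψ.symm ⟨(k, f), hf⟩, by simpa using hv, ?_⟩
    rintro i ⟨hi, rfl⟩
    rw [Equiv.eq_symm_apply]
    exact Subtype.ext (Prod.ext rfl (unique _ ⟨(ψ i).2, hi⟩))⟩

theorem LabelledEdge.toOneFactorization_injective :
    Function.Injective fun x : Σ p : Fin d → {P // IsOneFactor W P}, Fin n ≃ LabelledEdge p =>
      LabelledEdge.toOneFactorization x.1 x.2 := by
  have mem_iff (p : Fin d → {P // IsOneFactor W P}) (ψ : Fin n ≃ LabelledEdge p) (k f) :
      f ∈ (p k).1 ↔ ∃ i, (ψ i).1 = (k, f) :=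
    ⟨fun hf => ⟨ψ.symm ⟨(k, f), hf⟩, by simp⟩, fun ⟨i, hi⟩ => by simpa [hi] using (ψ i).2⟩
  rintro ⟨p, ψ⟩ ⟨p', ψ'⟩ h
  have apply_eq (i) : (ψ i).1 = (ψ' i).1 :=
    congrArg (fun x : Σ e : Fin n → W, OneFactorization (fun i => (e i : Finset (Fin n))) d =>
      (x.2.1 i, (x.1 i : Finset (Fin n)))) h
  obtain rfl : p = p' := by
    ext k f
    simp only [mem_iff p ψ, mem_iff p' ψ', apply_eq]
  rw [Equiv.ext fun i => Subtype.ext (apply_eq i)]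

theorem factorial_mul_numOneFactors_pow_le (hd : 0 < d) (hW : ∀ e ∈ W, #e = d) :
    n.factorial * numOneFactors W ^ d ≤
      ∑ e : Fin n → W, Nat.card (OneFactorization (fun i => (e i : Finset (Fin n))) d) := by
  classical
  have card_oneFactor : Nat.card {P // IsOneFactor W P} = numOneFactors W :=
    Nat.card_coe_set_eq {P | IsOneFactor W P}
  have card_enumeration (p : Fin d → {P // IsOneFactor W P}) :
      Nat.card (Fin n ≃ LabelledEdge p) = n.factorial := by
    have enumeration : Fin n ≃ LabelledEdge p :=
      (Finite.equivFinOfCardEq (card_labelledEdge hd hW p)).symm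
    rw [Nat.card_eq_fintype_card, Fintype.card_equiv enumeration, Fintype.card_fin]
  calc n.factorial * numOneFactors W ^ d
      = Nat.card (Σ p : Fin d → {P // IsOneFactor W P}, Fin n ≃ LabelledEdge p) := by
        rw [Nat.card_sigma, sum_congr rfl fun p _ => card_enumeration p, sum_const, card_univ,
          ← Nat.card_eq_fintype_card, Nat.card_fun, card_oneFactor, Nat.card_fin, smul_eq_mul,
          mul_comm]
    _ ≤ Nat.card (Σ e : Fin n → W, OneFactorization (fun i => (e i : Finset (Fin n))) d) :=
        Nat.card_le_card_of_injective _ LabelledEdge.toOneFactorization_injective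
    _ = _ := Nat.card_sigma

theorem sum_prod_eq_factorial_mul_mper (hd : 0 < d) (A : (Fin d → Fin n) → ℕ) :
    ∑ ρ : Fin d → Equiv.Perm (Fin n), ∏ i, A (fun k => ρ k i) = n.factorial * mper A := by
  classical
  have sum_mper : n.factorial * mper A = ∑ _τ : Equiv.Perm (Fin n), mper A := by
    rw [sum_const, card_univ, Fintype.card_perm, Fintype.card_fin, smul_eq_mul]
  rw [sum_mper]
  simp only [mper]
  rw [← sum_product']
  refine sum_nbij' (fun ρ => (ρ ⟨0, hd⟩, fun k => ρ k * (ρ ⟨0, hd⟩)⁻¹))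
    (fun x k => x.2 k * x.1) ?_ (by simp) (by simp) ?_ ?_
  · intro ρ _
    exact mem_product.2 ⟨mem_univ _, mem_filter.2 ⟨mem_univ _, fun _ => mul_inv_cancel _⟩⟩
  · rintro ⟨τ, σ⟩ hσ
    have hσ : σ ⟨0, hd⟩ = 1 := (mem_filter.1 (mem_product.1 hσ).2).2 hd
    simp [hσ]
  · intro ρ _
    rw [← Equiv.prod_comp (ρ ⟨0, hd⟩) (fun i => A fun k => (ρ k * (ρ ⟨0, hd⟩)⁻¹) i)]
    simp

theorem sum_card_edgeColoring_le (hd : 0 < d) (W : Finset (Finset (Fin n))) :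
    ∑ e : Fin n → W, Nat.card (EdgeColoring (fun i => (e i : Finset (Fin n))) d) ≤
      n.factorial * mper (adjMatrix n d W) := by
  classical
  let Compatible (ρ : Fin d → Equiv.Perm (Fin n)) : Prop :=
    ∀ i, (fun k => ρ k i).Injective ∧ univ.image (fun k => ρ k i) ∈ W
  have sum_prod : ∑ ρ : Fin d → Equiv.Perm (Fin n), ∏ i, adjMatrix n d W (fun k => ρ k i) =
      Nat.card {ρ // Compatible ρ} := by
    simp [adjMatrix, prod_ite_zero, Fintype.card_subtype, Compatible]
  rw [← sum_prod_eq_factorial_mul_mper hd, sum_prod, ← Nat.card_sigma]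
  let toPerm := Equiv.embeddingEquivOfFinite (Fin n)
  have compatible (e : Fin n → W) (ρ : EdgeColoring (fun i => (e i : Finset (Fin n))) d) :
      Compatible fun k => toPerm (ρ.1 k) :=
    fun i => ⟨(ρ.2 i).1, by simpa [toPerm] using (ρ.2 i).2 ▸ (e i).2⟩
  refine Nat.card_le_card_of_injective
    (fun x => (⟨fun k => toPerm (x.2.1 k), compatible x.1 x.2⟩ : {ρ // Compatible ρ})) ?_
  rintro ⟨e, ρ⟩ ⟨e', ρ'⟩ h
  have colors_eq : ρ.1 = ρ'.1 :=
    funext fun k => toPerm.injective (congrFun (congrArg Subtype.val h) k)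
  obtain rfl : e = e' := by
    ext i : 2
    have image_eq := (ρ.2 i).2
    rw [colors_eq] at image_eq
    exact image_eq.symm.trans (ρ'.2 i).2
  rw [Subtype.ext colors_eq]

end DoubleCounting

/-- For a simple 3-uniform hypergraph `G` on `n` vertices with `3 ∣ n`, the number of
1-factors satisfies `φ(G) ≤ ((3/2^(3/2))^n · per M(G))^(1/3)`. -/
theorem stmt9 (n : ℕ) (hn : 3 ∣ n) (W : Finset (Finset (Fin n)))
    (huniform : ∀ e ∈ W, e.card = 3) :
    (numOneFactors W : ℝ) ≤
      (((3 : ℝ) / (2 : ℝ) ^ ((3 : ℝ) / 2)) ^ n * (mper (adjMatrix n 3 W) : ℝ)) ^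
        ((1 : ℝ) / 3) := by
  set K : ℝ := 3 / 2 ^ ((3 : ℝ) / 2)
  have factorial_mul_le : (n.factorial : ℝ) * numOneFactors W ^ 3 ≤
      n.factorial * (K ^ n * mper (adjMatrix n 3 W)) :=
    calc (n.factorial : ℝ) * numOneFactors W ^ 3
        ≤ ∑ e : Fin n → W,
            (Nat.card (OneFactorization (fun i => (e i : Finset (Fin n))) 3) : ℝ) := by
          exact_mod_cast factorial_mul_numOneFactors_pow_le three_pos huniform
      _ ≤ ∑ e : Fin n → W, K ^ n * Nat.card (EdgeColoring (fun i => (e i : Finset (Fin n))) 3) :=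
          sum_le_sum fun e _ => by
            simpa using card_oneFactorization_le fun i => huniform _ (e i).2
      _ ≤ K ^ n * (n.factorial * mper (adjMatrix n 3 W)) := by
          rw [← mul_sum]
          gcongr
          exact_mod_cast sum_card_edgeColoring_le three_pos W
      _ = n.factorial * (K ^ n * mper (adjMatrix n 3 W)) := mul_left_comm _ _ _
  rw [one_div, Real.le_rpow_inv_iff_of_pos (by positivity) (by positivity) three_pos]
  exact_mod_cast le_of_mul_le_mul_left factorial_mul_le (Nat.cast_pos.2 n.factorial_pos)
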